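/- arXiv:2209.05028 — 2 statements merged into one kernel-verified Lean document; each statement's English description precedes it below -/
import Mathlib

section
/- In the multinomial assignment setting, if m(n)·n^{-2}/log n → ∞ as n → ∞, then E[min_{σ ∈ S_n} Σ_{i=1}^n X_{iσ(i)}] = (m(n)/n)(1+o(1)); that is, (n/m(n))·E[min_{σ} Σ_{i=1}^n X_{iσ(i)}] → 1 as n → ∞. -/
open MeasureTheory Filter Real

noncomputable section

/-- The uniform measure on the `n × n` grid of cells. -/
def cellMeasure (n : ℕ) : Measure (Fin n × Fin n) :=
  ((n : ENNReal) ^ 2)⁻¹ • Measure.count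

/-- The law of `m` i.i.d. points, each uniformly distributed on the `n × n` grid;
under this measure the matrix of cell counts is multinomial `M(m, n²)`. -/
def gridMeasure (m n : ℕ) : Measure (Fin m → Fin n × Fin n) :=
  Measure.pi fun _ => cellMeasure n

/-- `X_{ij}`: the number of the `m` points falling in cell `(i, j)`. -/
def cellCount {m n : ℕ} (i j : Fin n) (ω : Fin m → Fin n × Fin n) : ℕ :=
  (Finset.univ.filter fun k => ω k = (i, j)).card

/-- The assignment sum `S(σ) = ∑ i, X_{i σ(i)}`. -/
def assignSum {m n : ℕ} (σ : Equiv.Perm (Fin n)) (ω : Fin m → Fin n × Fin n) : ℝ :=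
  ∑ i, (cellCount i (σ i) ω : ℝ)

/-- `max_{σ ∈ S_n} S(σ)`. -/
def maxAssign {m n : ℕ} (ω : Fin m → Fin n × Fin n) : ℝ :=
  ⨆ σ : Equiv.Perm (Fin n), assignSum σ ω

/-- `min_{σ ∈ S_n} S(σ)`. -/
def minAssign {m n : ℕ} (ω : Fin m → Fin n × Fin n) : ℝ :=
  ⨅ σ : Equiv.Perm (Fin n), assignSum σ ω

/-- `E[max_{σ ∈ S_n} S(σ)]`. -/
def EmaxAssign (m n : ℕ) : ℝ :=
  ∫ ω, maxAssign ω ∂(gridMeasure m n)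

/-- `E[min_{σ ∈ S_n} S(σ)]`. -/
def EminAssign (m n : ℕ) : ℝ :=
  ∫ ω, minAssign ω ∂(gridMeasure m n)

/-!
Averaging over all permutations gives `min_σ S(σ) ≤ m / n`. Conversely `min_σ S(σ)` is at least `n`
times the smallest of the `n²` cell counts. The lower tail of a cell count is sub-Gaussian with mean
and variance proxy `q = m / n²`, so the smallest count has expectation at least
`q - √(2 q log n²) = q (1 - 2 √(log n / q))`, and `log n / q → 0` in the quasi-Gaussian zone.
-/

section Assignment

variable {ι : Type*} [Fintype ι]

lemma card_nsmul_sum_perm_apply [DecidableEq ι] {M : Type*} [AddCommMonoid M] (f : ι → M)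
    (i : ι) :
    Fintype.card ι • ∑ σ : Equiv.Perm ι, f (σ i) = Fintype.card (Equiv.Perm ι) • ∑ j, f j := by
  have apply_eq (k : ι) : ∑ σ : Equiv.Perm ι, f (σ k) = ∑ σ : Equiv.Perm ι, f (σ i) := by
    simpa using (Equiv.sum_comp (Equiv.mulRight (Equiv.swap i k)) fun σ => f (σ k)).symm
  calc Fintype.card ι • ∑ σ : Equiv.Perm ι, f (σ i)
      = ∑ k, ∑ σ : Equiv.Perm ι, f (σ k) := by simp [apply_eq]
    _ = ∑ σ : Equiv.Perm ι, ∑ k, f (σ k) := Finset.sum_comm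
    _ = Fintype.card (Equiv.Perm ι) • ∑ j, f j := by simp [Equiv.sum_comp]

lemma iInf_sum_perm_le_sum_div_card (A : ι → ι → ℝ) :
    ⨅ σ : Equiv.Perm ι, ∑ i, A i (σ i) ≤ (∑ i, ∑ j, A i j) / Fintype.card ι := by
  classical
  rcases isEmpty_or_nonempty ι with _ | _
  · simp
  set N := (Fintype.card (Equiv.Perm ι) : ℝ)
  have hN : 0 < N := Nat.cast_pos.2 Fintype.card_pos
  have card_mul_iInf_le_sum : N * ⨅ σ : Equiv.Perm ι, ∑ i, A i (σ i)
      ≤ ∑ σ : Equiv.Perm ι, ∑ i, A i (σ i) := by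
    simpa [N] using Finset.card_nsmul_le_sum Finset.univ
      (fun σ : Equiv.Perm ι => ∑ i, A i (σ i)) _
      fun σ _ => ciInf_le (Set.finite_range _).bddBelow σ
  have card_mul_sum_eq : (Fintype.card ι : ℝ) * ∑ σ : Equiv.Perm ι, ∑ i, A i (σ i)
      = N * ∑ i, ∑ j, A i j := by
    rw [Finset.sum_comm, Finset.mul_sum, Finset.mul_sum]
    exact Finset.sum_congr rfl fun i _ => by simpa [N] using card_nsmul_sum_perm_apply (A i) i
  rw [le_div_iff₀' (Nat.cast_pos.2 Fintype.card_pos)]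
  refine le_of_mul_le_mul_left ?_ hN
  calc N * (Fintype.card ι * ⨅ σ : Equiv.Perm ι, ∑ i, A i (σ i))
      = Fintype.card ι * (N * ⨅ σ : Equiv.Perm ι, ∑ i, A i (σ i)) := mul_left_comm _ _ _
    _ ≤ Fintype.card ι * ∑ σ : Equiv.Perm ι, ∑ i, A i (σ i) := by gcongr
    _ = N * ∑ i, ∑ j, A i j := card_mul_sum_eq

lemma exists_apply_le_iInf_sum_perm_div_card [Nonempty ι] (A : ι → ι → ℝ) :
    ∃ i j, A i j ≤ (⨅ σ : Equiv.Perm ι, ∑ i, A i (σ i)) / Fintype.card ι := by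
  obtain ⟨σ, hσ⟩ := exists_eq_ciInf_of_finite (f := fun σ : Equiv.Perm ι => ∑ i, A i (σ i))
  have card_ne_zero : (Fintype.card ι : ℝ) ≠ 0 := by exact_mod_cast Fintype.card_ne_zero
  obtain ⟨i, -, hi⟩ := Finset.exists_le_of_sum_le (s := Finset.univ) (f := fun i => A i (σ i))
    (g := fun _ => (∑ i, A i (σ i)) / Fintype.card ι) Finset.univ_nonempty
    (by simp [mul_div_cancel₀ _ card_ne_zero])
  exact ⟨i, σ i, hσ ▸ hi⟩

end Assignment

section MaximalInequality

open ProbabilityTheory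

variable {Ω ι : Type*} {mΩ : MeasurableSpace Ω} {μ : Measure Ω} [IsProbabilityMeasure μ]
  {X : ι → Ω → ℝ} {Y : Ω → ℝ} {t : ℝ}

lemma exp_mul_integral_le_mgf (hY : Integrable Y μ)
    (hexp : Integrable (fun ω => exp (t * Y ω)) μ) : exp (t * ∫ ω, Y ω ∂μ) ≤ mgf Y μ t := by
  rw [← integral_const_mul]
  exact convexOn_exp.map_integral_le continuous_exp.continuousOn isClosed_univ
    (.of_forall fun _ => Set.mem_univ _) (hY.const_mul t) hexp

variable [Fintype ι]

lemma exp_mul_integral_le_sum_mgf_of_exists_le (ht : t ≤ 0)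
    (hX : ∀ i, Integrable (fun ω => exp (t * X i ω)) μ) (hY : Integrable Y μ)
    (hXY : ∀ᵐ ω ∂μ, ∃ i, X i ω ≤ Y ω) : exp (t * ∫ ω, Y ω ∂μ) ≤ ∑ i, mgf (X i) μ t := by
  have exp_le_sum : ∀ᵐ ω ∂μ, exp (t * Y ω) ≤ ∑ i, exp (t * X i ω) := by
    filter_upwards [hXY] with ω ⟨i, hi⟩
    calc exp (t * Y ω) ≤ exp (t * X i ω) :=
          exp_le_exp.2 (mul_le_mul_of_nonpos_left hi ht)
      _ ≤ ∑ i, exp (t * X i ω) :=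
          Finset.single_le_sum (f := fun i => exp (t * X i ω)) (fun _ _ => (exp_pos _).le)
            (Finset.mem_univ i)
  have sum_integrable : Integrable (fun ω => ∑ i, exp (t * X i ω)) μ :=
    integrable_finsetSum _ fun i _ => hX i
  have exp_integrable : Integrable (fun ω => exp (t * Y ω)) μ :=
    sum_integrable.mono' (continuous_exp.comp_aestronglyMeasurable (hY.const_mul t).1)
      (exp_le_sum.mono fun ω hω => by simpa using hω)
  calc exp (t * ∫ ω, Y ω ∂μ) ≤ mgf Y μ t := exp_mul_integral_le_mgf hY exp_integrable
    _ ≤ ∫ ω, ∑ i, exp (t * X i ω) ∂μ := integral_mono_ae exp_integrable sum_integrable exp_le_sum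
    _ = ∑ i, mgf (X i) μ t := integral_finsetSum _ fun i _ => hX i

lemma sub_sqrt_le_integral_of_exists_le [Nontrivial ι] {a v : ℝ} (hv : 0 < v)
    (hX : ∀ i, ∀ t < 0, Integrable (fun ω => exp (t * X i ω)) μ)
    (hmgf : ∀ i, ∀ t < 0, mgf (X i) μ t ≤ exp (t * a + v * t ^ 2 / 2))
    (hY : Integrable Y μ) (hXY : ∀ᵐ ω ∂μ, ∃ i, X i ω ≤ Y ω) :
    a - √(2 * v * log (Fintype.card ι)) ≤ ∫ ω, Y ω ∂μ := by
  have one_lt_card : (1 : ℝ) < Fintype.card ι := by exact_mod_cast Fintype.one_lt_card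
  set L := log (Fintype.card ι)
  have hL : 0 < L := log_pos one_lt_card
  set s := √(2 * v * L)
  have hs : 0 < s := sqrt_pos.2 (by positivity)
  have sq_s : s ^ 2 = 2 * v * L := sq_sqrt (by positivity)
  -- This `t` makes the entropy term `L` and the variance term `v * t ^ 2 / 2` equal.
  obtain ⟨t, hst⟩ : ∃ t, s = -(v * t) := ⟨-s / v, by field_simp⟩
  have ht : t < 0 := by nlinarith
  have exp_le : exp (t * ∫ ω, Y ω ∂μ) ≤ exp (L + (t * a + v * t ^ 2 / 2)) := by
    calc exp (t * ∫ ω, Y ω ∂μ) ≤ ∑ i, mgf (X i) μ t :=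
          exp_mul_integral_le_sum_mgf_of_exists_le ht.le (fun i => hX i t ht) hY hXY
      _ ≤ ∑ _ : ι, exp (t * a + v * t ^ 2 / 2) := Finset.sum_le_sum fun i _ => hmgf i t ht
      _ = exp (L + (t * a + v * t ^ 2 / 2)) := by
          simp [exp_add, L, exp_log (zero_lt_one.trans one_lt_card)]
  have entropy_eq_variance : L = v * t ^ 2 / 2 := by
    refine mul_left_cancel₀ (mul_pos two_pos hv).ne' ?_
    rw [← sq_s, hst]
    ring
  have : t * ∫ ω, Y ω ∂μ ≤ t * (a - s) := by
    calc t * ∫ ω, Y ω ∂μ ≤ L + (t * a + v * t ^ 2 / 2) := exp_le_exp.1 exp_le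
      _ = t * (a - s) := by rw [entropy_eq_variance, hst]; ring
  exact (mul_le_mul_left_of_neg ht).1 this

end MaximalInequality

section OccupancyCount

open ProbabilityTheory

lemma exp_le_one_add_add_sq_div_two_of_nonpos {x : ℝ} (hx : x ≤ 0) :
    exp x ≤ 1 + x + x ^ 2 / 2 := by
  have lower : 1 - x + x ^ 2 / 2 ≤ exp (-x) := by
    simpa [sub_eq_add_neg] using quadratic_le_exp_of_nonneg (neg_nonneg.2 hx)
  have exp_mul_exp_neg : exp x * exp (-x) = 1 := by simp [← exp_add]
  have : exp x * (1 - x + x ^ 2 / 2) ≤ (1 + x + x ^ 2 / 2) * (1 - x + x ^ 2 / 2) := by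
    nlinarith [mul_le_mul_of_nonneg_left lower (exp_pos x).le, sq_nonneg (x ^ 2)]
  exact le_of_mul_le_mul_right this (by nlinarith)

variable {ι α : Type*} [Fintype ι] [MeasurableSpace α] {μ : Measure α} [IsProbabilityMeasure μ]
  {A : Set α} [DecidablePred (· ∈ A)]

lemma mgf_card_filter_mem_pi (hA : MeasurableSet A) (t : ℝ) :
    mgf (fun ω : ι → α => ((Finset.univ.filter fun k => ω k ∈ A).card : ℝ))
        (Measure.pi fun _ => μ) t
      = (1 + μ.real A * (exp t - 1)) ^ Fintype.card ι := by
  have exp_eq_prod (ω : ι → α) :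
      exp (t * ((Finset.univ.filter fun k => ω k ∈ A).card : ℝ))
        = ∏ k, (1 + A.indicator (fun _ => exp t - 1) (ω k)) := by
    have factor_eq (k : ι) : 1 + A.indicator (fun _ => exp t - 1) (ω k)
        = if ω k ∈ A then exp t else 1 := by
      by_cases hk : ω k ∈ A <;> simp [hk]
    simp [factor_eq, Finset.prod_ite, mul_comm t, exp_nat_mul]
  have integral_factor : ∫ x, (1 + A.indicator (fun _ => exp t - 1) x) ∂μ
      = 1 + μ.real A * (exp t - 1) := by
    rw [integral_add (integrable_const _) ((integrable_const _).indicator hA),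
      integral_indicator_const _ hA]
    simp
  simp only [mgf, exp_eq_prod]
  rw [integral_fintype_prod_eq_pow fun x => 1 + A.indicator (fun _ => exp t - 1) x,
    integral_factor]

lemma mgf_card_filter_mem_pi_le_exp (hA : MeasurableSet A) (t : ℝ) :
    mgf (fun ω : ι → α => ((Finset.univ.filter fun k => ω k ∈ A).card : ℝ))
        (Measure.pi fun _ => μ) t
      ≤ exp (Fintype.card ι * μ.real A * (exp t - 1)) := by
  have base_nonneg : 0 ≤ 1 + μ.real A * (exp t - 1) := by
    nlinarith [mul_nonneg (measureReal_nonneg (μ := μ) (s := A)) (exp_pos t).le,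
      measureReal_le_one (μ := μ) (s := A)]
  calc mgf (fun ω : ι → α => ((Finset.univ.filter fun k => ω k ∈ A).card : ℝ))
        (Measure.pi fun _ => μ) t
      = (1 + μ.real A * (exp t - 1)) ^ Fintype.card ι := mgf_card_filter_mem_pi hA t
    _ ≤ exp (μ.real A * (exp t - 1)) ^ Fintype.card ι :=
        pow_le_pow_left₀ base_nonneg (by linarith [add_one_le_exp (μ.real A * (exp t - 1))]) _
    _ = exp (Fintype.card ι * μ.real A * (exp t - 1)) := by rw [← exp_nat_mul, mul_assoc]

end OccupancyCount

section Grid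

open ProbabilityTheory

variable {m n : ℕ}

lemma cellMeasure_eq_uniformOn (n : ℕ) : cellMeasure n = uniformOn Set.univ := by
  simp [cellMeasure, uniformOn, ProbabilityTheory.cond, sq, ENat.card_eq_coe_fintype_card]

instance isProbabilityMeasure_cellMeasure [NeZero n] : IsProbabilityMeasure (cellMeasure n) :=
  cellMeasure_eq_uniformOn n ▸ inferInstance

instance isProbabilityMeasure_gridMeasure [NeZero n] :
    IsProbabilityMeasure (gridMeasure m n) :=
  inferInstanceAs (IsProbabilityMeasure (Measure.pi fun _ => cellMeasure n))

lemma cellMeasure_real_singleton (c : Fin n × Fin n) :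
    (cellMeasure n).real {c} = ((n : ℝ) ^ 2)⁻¹ := by
  simp [cellMeasure, measureReal_def]

lemma sum_cellCount (ω : Fin m → Fin n × Fin n) : ∑ i, ∑ j, cellCount i j ω = m := by
  rw [← Fintype.sum_prod_type' fun i j => cellCount i j ω]
  simpa [cellCount] using (Finset.card_eq_sum_card_fiberwise (f := ω) (s := Finset.univ)
    (t := Finset.univ) fun _ _ => Finset.mem_coe.2 (Finset.mem_univ _)).symm

lemma minAssign_le_div (ω : Fin m → Fin n × Fin n) : minAssign ω ≤ m / n := by
  calc minAssign ω ≤ (∑ i, ∑ j, (cellCount i j ω : ℝ)) / Fintype.card (Fin n) :=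
        iInf_sum_perm_le_sum_div_card fun i j => (cellCount i j ω : ℝ)
    _ = m / n := by simp [← Nat.cast_sum, sum_cellCount]

lemma exists_cellCount_le_minAssign_div [NeZero n] (ω : Fin m → Fin n × Fin n) :
    ∃ c : Fin n × Fin n, (cellCount c.1 c.2 ω : ℝ) ≤ minAssign ω / n := by
  obtain ⟨i, j, hij⟩ :=
    exists_apply_le_iInf_sum_perm_div_card fun i j => (cellCount i j ω : ℝ)
  exact ⟨(i, j), by simpa [minAssign, assignSum] using hij⟩

lemma mgf_cellCount_le_exp [NeZero n] (i j : Fin n) {t : ℝ} (ht : t ≤ 0) :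
    mgf (fun ω => (cellCount i j ω : ℝ)) (gridMeasure m n) t
      ≤ exp (t * (m / n ^ 2) + m / n ^ 2 * t ^ 2 / 2) := by
  have poisson_bound : mgf (fun ω => (cellCount i j ω : ℝ)) (gridMeasure m n) t
      ≤ exp (m / n ^ 2 * (exp t - 1)) := by
    simpa [cellCount, gridMeasure, cellMeasure_real_singleton, div_eq_mul_inv] using
      mgf_card_filter_mem_pi_le_exp (ι := Fin m) (μ := cellMeasure n)
        (MeasurableSet.singleton (i, j)) t
  refine poisson_bound.trans (exp_le_exp.2 ?_)
  have : (m / n ^ 2 : ℝ) * (exp t - 1) ≤ m / n ^ 2 * (t + t ^ 2 / 2) :=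
    mul_le_mul_of_nonneg_left (by linarith [exp_le_one_add_add_sq_div_two_of_nonpos ht])
      (by positivity)
  linarith

lemma eminAssign_le_div [NeZero n] : EminAssign m n ≤ m / n := by
  simpa [EminAssign] using integral_mono (μ := gridMeasure m n) Integrable.of_finite
    Integrable.of_finite minAssign_le_div

lemma sub_sqrt_le_eminAssign_div (hm : 0 < m) (hn : 1 < n) :
    (m / n ^ 2 : ℝ) - 2 * √(m / n ^ 2 * log n) ≤ EminAssign m n / n := by
  have : NeZero n := ⟨by lia⟩
  have : Nontrivial (Fin n) := Fin.nontrivial_iff_two_le.2 hn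
  have bound : (m / n ^ 2 : ℝ) - √(2 * (m / n ^ 2) * log (Fintype.card (Fin n × Fin n)))
      ≤ ∫ ω, minAssign ω / n ∂gridMeasure m n :=
    sub_sqrt_le_integral_of_exists_le (by positivity) (fun _ _ _ => Integrable.of_finite)
      (fun c _ ht => mgf_cellCount_le_exp c.1 c.2 ht.le) Integrable.of_finite
      (.of_forall exists_cellCount_le_minAssign_div)
  have sqrt_eq : √(2 * (m / n ^ 2) * log (Fintype.card (Fin n × Fin n)))
      = 2 * √(m / n ^ 2 * log n) := by
    have : 2 * (m / n ^ 2 : ℝ) * log (Fintype.card (Fin n × Fin n))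
        = 2 ^ 2 * (m / n ^ 2 * log n) := by
      simp only [Fintype.card_prod, Fintype.card_fin, ← sq, Nat.cast_pow, log_pow, Nat.cast_ofNat]
      ring
    rw [this, sqrt_mul (by positivity), sqrt_sq zero_le_two]
  rwa [sqrt_eq, integral_div] at bound

lemma one_sub_sqrt_le_div_mul_eminAssign (hm : 0 < m) (hn : 1 < n) :
    1 - 2 * √(((m / n ^ 2 : ℝ) / log n)⁻¹) ≤ n / m * EminAssign m n := by
  have : (0 : ℝ) < n := by exact_mod_cast zero_lt_one.trans hn
  set q : ℝ := m / n ^ 2 with hq_def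
  have hq : 0 < q := by positivity
  have sqrt_eq : √(q * log n) = q * √((q / log n)⁻¹) := by
    rw [← sqrt_sq hq.le, ← sqrt_mul (sq_nonneg _), sqrt_sq hq.le]
    congr 1
    field_simp
  calc 1 - 2 * √((q / log n)⁻¹) = (q - 2 * √(q * log n)) / q := by rw [sqrt_eq]; field_simp
    _ ≤ EminAssign m n / n / q := by
        gcongr
        exact sub_sqrt_le_eminAssign_div hm hn
    _ = n / m * EminAssign m n := by rw [hq_def]; field_simp

lemma div_mul_eminAssign_le_one (hm : 0 < m) (hn : 0 < n) :
    (n / m : ℝ) * EminAssign m n ≤ 1 := by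
  have : NeZero n := ⟨hn.ne'⟩
  calc (n / m : ℝ) * EminAssign m n ≤ n / m * (m / n) := by gcongr; exact eminAssign_le_div
    _ = 1 := by field_simp

end Grid

/-- **Quasi-Gaussian zone, minima.**  If `m(n) n⁻² / log n → ∞`, then
`E[min_σ ∑ i, X_{i σ(i)}] = (m(n)/n) (1 + o(1))`. -/
theorem expected_min_quasiGaussian (m : ℕ → ℕ) (hm : ∀ n, 0 < m n)
    (h : Tendsto (fun n : ℕ => ((m n : ℝ) / (n : ℝ) ^ 2) / Real.log n) atTop atTop) :
    Tendsto (fun n : ℕ => ((n : ℝ) / (m n : ℝ)) * EminAssign (m n) n) atTop (nhds 1) := by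
  have rate : Tendsto (fun n : ℕ => 1 - 2 * √(((m n : ℝ) / (n : ℝ) ^ 2 / Real.log n)⁻¹)) atTop
      (nhds 1) := by
    simpa using (h.inv_tendsto_atTop.sqrt.const_mul 2).const_sub 1
  refine tendsto_of_tendsto_of_tendsto_of_le_of_le' rate tendsto_const_nhds ?_ ?_
  · filter_upwards [eventually_gt_atTop 1] with n hn
    exact one_sub_sqrt_le_div_mul_eminAssign (hm n) hn
  · filter_upwards [eventually_gt_atTop 0] with n hn
    exact div_mul_eminAssign_le_one (hm n) hn

end
end

section
/- In the multinomial assignment setting, let c > 0 and suppose m(n)·n^{-2}/log n → c as n → ∞. Let H* = H*(c) be the unique real number H > 1 satisfying H log H − (H − 1) = 1/c. Then E[max_{σ ∈ S_n} Σ_{i=1}^n X_{iσ(i)}] = c·H*·n·log n·(1+o(1)); that is, E[max_σ Σ_i X_{iσ(i)}]/(c·H*·n·log n) → 1 as n → ∞. -/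
open MeasureTheory Filter Real

noncomputable section

/-!
Upper bound: the moment generating function of `S(σ)` at `t` is `(1 + (exp t - 1) / n) ^ m`, so
Jensen's inequality and summation over the `n! ≤ n ^ n` permutations give
`t * E[max S] ≤ n * log n + m * (exp t - 1) / n`; the choice `t = log H*` is asymptotically sharp.

Lower bound: let `H < H*` and `T = ⌈c * H * log n⌉`. By Poissonization, all counts in a fixed set
of `k` cells are below `T` with probability at most `e * √m * exp (-k * p)`, where `p` is the
probability that a Poisson variable of mean `m / n ^ 2` equals `T`, and Stirling's formula gives
`n * p → ∞`. A union bound over at most `4 ^ n` blocks shows that with high probability every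
`ε n × ε n` block contains a count at least `T`. Then a permutation using as many cells with count
at least `T` as possible uses at most `ε n` other cells: otherwise the rows and columns of these
cells span a block containing a count at least `T`, and a transposition would gain that cell.
-/

open ProbabilityTheory InformationTheory Topology
open scoped NNReal Nat

section Permutations

lemma exists_perm_not_rel_of_not_rel {α : Type*} [Finite α] (r : α → α → Prop) :
    ∃ σ : Equiv.Perm α, ∀ i j, ¬ r i (σ i) → ¬ r j (σ j) → ¬ r i (σ j) := by
  classical
  have := Fintype.ofFinite α
  obtain ⟨σ, hσ⟩ := Finite.exists_max fun σ : Equiv.Perm α => Finset.card {i | r i (σ i)}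
  refine ⟨σ, fun i j hi hj hij => ?_⟩
  refine absurd (hσ (σ * Equiv.swap i j)) (not_le.2 (Finset.card_lt_card ?_))
  rw [Finset.ssubset_iff_of_subset]
  · exact ⟨i, (Finset.mem_filter_univ i).2 (by simpa using hij), by simpa using hi⟩
  · intro k hk
    simp only [Finset.mem_filter_univ] at hk ⊢
    have hki : k ≠ i := by rintro rfl; exact hi hk
    have hkj : k ≠ j := by rintro rfl; exact hj hk
    simpa [Equiv.swap_apply_of_ne_of_ne hki hkj] using hk

end Permutations

section Occupancy

variable {ι α : Type*} [Fintype ι] [DecidableEq α]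

/-- The occupancy number of the box `a` when the balls `i : ι` are thrown into the boxes
`ω i : α`. -/
def occupancy (ω : ι → α) (a : α) : ℕ :=
  Finset.card {i | ω i = a}

lemma sum_occupancy [Fintype α] (ω : ι → α) : ∑ a, occupancy ω a = Fintype.card ι :=
  (Finset.card_eq_sum_card_fiberwise fun _ _ => Finset.mem_coe.2 (Finset.mem_univ _)).symm

-- Both sides are the coefficient of `∏ a, X a ^ k a` in `(∑ a, X a) ^ card ι`.
lemma card_filter_occupancy_eq [Fintype α] [DecidableEq ι] {k : α → ℕ}
    (hk : ∑ a, k a = Fintype.card ι) :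
    Finset.card {ω : ι → α | occupancy ω = k} = Nat.multinomial Finset.univ k := by
  let d : (α → ℕ) → α →₀ ℕ := Finsupp.equivFunOnFinite.symm
  have prod_X (ω : ι → α) :
      ∏ i, (MvPolynomial.X (ω i) : MvPolynomial α ℕ) =
        MvPolynomial.monomial (d (occupancy ω)) 1 := by
    have single_sum : ∑ i, Finsupp.single (ω i) 1 = d (occupancy ω) := by
      ext a
      simp [d, occupancy, Finsupp.finsetSum_apply, Finsupp.single_apply]
    rw [← single_sum, MvPolynomial.monomial_sum_one]
    rfl
  have prod_X_pow (j : α → ℕ) :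
      ∏ a, (MvPolynomial.X a : MvPolynomial α ℕ) ^ j a = MvPolynomial.monomial (d j) 1 := by
    rw [MvPolynomial.monomial_eq, Finsupp.prod_fintype _ _ (by simp)]
    simp [d]
  have expansion :
      ∑ ω : ι → α, MvPolynomial.monomial (d (occupancy ω)) 1 =
        ∑ j ∈ Finset.piAntidiag Finset.univ (Fintype.card ι),
          (Nat.multinomial Finset.univ j : MvPolynomial α ℕ) * MvPolynomial.monomial (d j) 1 := by
    simp_rw [← prod_X, ← prod_X_pow, ← Finset.sum_pow_eq_sum_piAntidiag]
    rw [← Finset.card_univ, ← Finset.prod_const, Finset.prod_univ_sum, Fintype.piFinset_univ]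
  have coeff_d (j : α → ℕ) :
      MvPolynomial.coeff (d k) (MvPolynomial.monomial (d j) 1) = if j = k then 1 else 0 := by
    simp [MvPolynomial.coeff_monomial, d]
  have := congrArg (MvPolynomial.coeff (d k)) expansion
  simp_rw [← nsmul_eq_mul, MvPolynomial.coeff_sum, MvPolynomial.coeff_smul, coeff_d] at this
  simpa [hk] using this

end Occupancy

section Poisson

lemma poissonMeasure_real_Iio_le_exp_neg (r : ℝ≥0) (t : ℕ) :
    (poissonMeasure r).real (Set.Iio t) ≤ exp (-(poissonMeasure r).real {t}) :=
  calc (poissonMeasure r).real (Set.Iio t)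
      ≤ (poissonMeasure r).real {t}ᶜ := measureReal_mono fun _ hk => ne_of_lt hk
    _ = 1 - (poissonMeasure r).real {t} := probReal_compl_eq_one_sub (measurableSet_singleton t)
    _ ≤ exp (-(poissonMeasure r).real {t}) := one_sub_le_exp_neg _

lemma factorial_le_stirling {n : ℕ} (hn : n ≠ 0) :
    (n ! : ℝ) ≤ exp 1 * √n * (n / exp 1) ^ n := by
  obtain ⟨n, rfl⟩ := Nat.exists_eq_succ_of_ne_zero hn
  have h : Stirling.stirlingSeq (n + 1) ≤ exp 1 / √2 :=
    (Stirling.stirlingSeq'_antitone n.zero_le).trans_eq Stirling.stirlingSeq_one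
  rw [Stirling.stirlingSeq, div_le_iff₀ (by positivity), Real.sqrt_mul zero_le_two] at h
  refine h.trans_eq ?_
  field_simp

lemma exp_neg_mul_klFun_le_poissonMeasure_real {r : ℝ≥0} (hr : r ≠ 0) {k : ℕ} (hk : k ≠ 0) :
    exp (-(r * klFun (k / r))) ≤ exp 1 * √k * (poissonMeasure r).real {k} := by
  have hr0 : (0 : ℝ) < r := by positivity
  have hk0 : (0 : ℝ) < k := by positivity
  have exp_eq : exp (-(r * klFun (k / r))) = exp (-r) * r ^ k / (k / exp 1) ^ k := by
    rw [← exp_log (show 0 < exp (-r) * r ^ k / (k / exp 1) ^ k by positivity), klFun_apply]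
    congr 1
    rw [log_div hk0.ne' hr0.ne', log_div (by positivity) (by positivity),
      log_mul (by positivity) (by positivity), log_exp, log_pow, log_pow,
      log_div hk0.ne' (exp_ne_zero 1), log_exp]
    field_simp
    ring
  rw [exp_eq, poissonMeasure_real_singleton, div_le_iff₀ (by positivity)]
  calc exp (-r) * r ^ k = exp (-r) * r ^ k / k ! * k ! := by field_simp
    _ ≤ exp (-r) * r ^ k / k ! * (exp 1 * √k * (k / exp 1) ^ k) := by
      gcongr
      exact factorial_le_stirling hk
    _ = exp 1 * √k * (exp (-r) * r ^ k / k !) * (k / exp 1) ^ k := by ring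

end Poisson

section Poissonization

variable {α : Type*} [Fintype α] [MeasurableSpace α] [MeasurableSingletonClass α]
  (μ : Measure α) [IsProbabilityMeasure μ]

lemma prod_poissonMeasure_real_singleton (r : ℝ≥0) (k : α → ℕ) :
    ∏ a, (poissonMeasure (r * (μ {a}).toNNReal)).real {k a} =
      (poissonMeasure r).real {∑ a, k a} *
        (Nat.multinomial Finset.univ k * ∏ a, μ.real {a} ^ k a) := by
  have sum_rate : ∑ a, (r : ℝ) * μ.real {a} = r := by
    rw [← Finset.mul_sum, sum_measureReal_singleton]; simp
  have rate (a : α) : ((r * (μ {a}).toNNReal : ℝ≥0) : ℝ) = r * μ.real {a} := rfl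
  simp_rw [poissonMeasure_real_singleton, rate, Finset.prod_div_distrib, Finset.prod_mul_distrib,
    ← Real.exp_sum, Finset.sum_neg_distrib, sum_rate, mul_pow, Finset.prod_mul_distrib,
    Finset.prod_pow_eq_pow_sum, ← Nat.multinomial_spec Finset.univ k]
  have : (Nat.multinomial Finset.univ k : ℝ) ≠ 0 := by
    exact_mod_cast (Nat.multinomial_pos Finset.univ k).ne'
  push_cast
  field_simp

variable {ι : Type*} [Fintype ι] [DecidableEq α]

lemma pi_real_occupancy_eq {k : α → ℕ} (hk : ∑ a, k a = Fintype.card ι) :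
    (Measure.pi fun _ : ι => μ).real {ω | occupancy ω = k} =
      Nat.multinomial Finset.univ k * ∏ a, μ.real {a} ^ k a := by
  classical
  have singleton_weight (ω : ι → α) (hω : occupancy ω = k) :
      (Measure.pi fun _ : ι => μ).real {ω} = ∏ a, μ.real {a} ^ k a := by
    rw [measureReal_def, Measure.pi_singleton, ENNReal.toReal_prod, ← hω]
    simp_rw [occupancy, ← Finset.prod_const]
    exact (Finset.prod_fiberwise' Finset.univ ω fun a => μ.real {a}).symm
  have coe_filter : {ω : ι → α | occupancy ω = k} =
      (Finset.univ.filter fun ω : ι → α => occupancy ω = k : Finset (ι → α)) := by simp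
  rw [coe_filter, ← sum_measureReal_singleton, Finset.sum_congr rfl fun ω hω =>
    singleton_weight ω (Finset.mem_filter_univ ω |>.1 hω), Finset.sum_const,
    card_filter_occupancy_eq hk, nsmul_eq_mul]

theorem pi_poissonMeasure_restrict_sum_eq (r : ℝ≥0) :
    (Measure.pi fun a => poissonMeasure (r * (μ {a}).toNNReal)).restrict
        {k | ∑ a, k a = Fintype.card ι} =
      poissonMeasure r {Fintype.card ι} • (Measure.pi fun _ : ι => μ).map occupancy := by
  refine Measure.ext_of_singleton fun k => ?_
  rw [Measure.restrict_apply (measurableSet_singleton k), Measure.smul_apply,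
    Measure.map_apply (measurable_of_finite _) (measurableSet_singleton k), smul_eq_mul]
  by_cases hk : ∑ a, k a = Fintype.card ι
  · have inter_eq : {k} ∩ {k : α → ℕ | ∑ a, k a = Fintype.card ι} = {k} := by simpa using hk
    have prod_eq := prod_poissonMeasure_real_singleton μ r k
    rw [hk, ← pi_real_occupancy_eq μ hk] at prod_eq
    rw [inter_eq, ← ENNReal.toReal_eq_toReal_iff' (by finiteness) (by finiteness),
      Measure.pi_singleton, ENNReal.toReal_prod, ENNReal.toReal_mul]
    exact prod_eq
  · have h : occupancy ⁻¹' {k} = (∅ : Set (ι → α)) :=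
      Set.eq_empty_of_forall_notMem fun ω hω => hk (by rw [← hω, sum_occupancy])
    simp [h, hk]

lemma poissonMeasure_real_mul_pi_real_occupancy_mem_le (r : ℝ≥0) (s : Set (α → ℕ)) :
    (poissonMeasure r).real {Fintype.card ι} *
        (Measure.pi fun _ : ι => μ).real {ω | occupancy ω ∈ s} ≤
      (Measure.pi fun a => poissonMeasure (r * (μ {a}).toNNReal)).real s := by
  have restrict_eq := congrArg (fun ν => ν.real s) (pi_poissonMeasure_restrict_sum_eq (ι := ι) μ r)
  simp only [measureReal_ennreal_smul_apply, map_measureReal_apply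
    (measurable_of_finite occupancy) (MeasurableSet.of_discrete (s := s))] at restrict_eq
  calc _ = _ := restrict_eq.symm
    _ ≤ _ := ENNReal.toReal_mono (by finiteness) (Measure.restrict_apply_le _ _)

end Poissonization

theorem pi_real_forall_occupancy_lt_le {ι α : Type*} [Fintype ι] [Nonempty ι] [Finite α]
    [DecidableEq α] [MeasurableSpace α] [MeasurableSingletonClass α] (μ : Measure α)
    [IsProbabilityMeasure μ] (s : Finset α) (t : ℕ) :
    (Measure.pi fun _ : ι => μ).real {ω | ∀ a ∈ s, occupancy ω a < t} ≤
      exp 1 * √(Fintype.card ι) *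
        exp (-∑ a ∈ s, (poissonMeasure (Fintype.card ι * (μ {a}).toNNReal)).real {t}) := by
  have := Fintype.ofFinite α
  set m : ℕ := Fintype.card ι
  set P := (Measure.pi fun _ : ι => μ).real {ω | ∀ a ∈ s, occupancy ω a < t}
  have one_le : 1 ≤ exp 1 * √m * (poissonMeasure m).real {m} := by
    have hm : m ≠ 0 := Fintype.card_ne_zero
    simpa [klFun_one, hm] using
      exp_neg_mul_klFun_le_poissonMeasure_real (r := m) (by simpa using hm) hm
  have poissonized : (poissonMeasure m).real {m} * P ≤
      exp (-∑ a ∈ s, (poissonMeasure (m * (μ {a}).toNNReal)).real {t}) :=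
    calc (poissonMeasure m).real {m} * P
        ≤ (Measure.pi fun a => poissonMeasure (m * (μ {a}).toNNReal)).real
            (Set.pi s fun _ => Set.Iio t) :=
          poissonMeasure_real_mul_pi_real_occupancy_mem_le (ι := ι) μ m
            (Set.pi s fun _ => Set.Iio t)
      _ = ∏ a ∈ s, (poissonMeasure (m * (μ {a}).toNNReal)).real (Set.Iio t) := by
          rw [measureReal_def, Measure.pi_pi_finset, ENNReal.toReal_prod]
          rfl
      _ ≤ ∏ a ∈ s, exp (-(poissonMeasure (m * (μ {a}).toNNReal)).real {t}) := by
          gcongr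
          exact poissonMeasure_real_Iio_le_exp_neg _ t
      _ = exp (-∑ a ∈ s, (poissonMeasure (m * (μ {a}).toNNReal)).real {t}) := by
          rw [← Real.exp_sum, Finset.sum_neg_distrib]
  calc P ≤ exp 1 * √m * (poissonMeasure m).real {m} * P :=
        le_mul_of_one_le_left measureReal_nonneg one_le
    _ = exp 1 * √m * ((poissonMeasure m).real {m} * P) := mul_assoc _ _ _
    _ ≤ _ := by gcongr

section ExponentialMoments

variable {ι Ω : Type*} [Finite ι] [MeasurableSpace Ω] {μ : Measure Ω} {X : ι → Ω → ℝ}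

lemma integrable_iSup_of_finite (hX : ∀ i, Integrable (X i) μ) :
    Integrable (fun ω => ⨆ i, X i ω) μ := by
  have := Fintype.ofFinite ι
  refine (integrable_finsetSum Finset.univ fun i _ => (hX i).norm).mono'
    (AEMeasurable.iSup fun i => (hX i).aemeasurable).aestronglyMeasurable (.of_forall fun ω => ?_)
  cases isEmpty_or_nonempty ι
  · simp
  · obtain ⟨i, hi⟩ := exists_eq_ciSup_of_finite (f := fun i => X i ω)
    rw [← hi]
    exact Finset.single_le_sum (f := fun i => ‖X i ω‖) (fun _ _ => norm_nonneg _)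
      (Finset.mem_univ i)

theorem integral_iSup_le_of_cgf_le [Nonempty ι] [IsProbabilityMeasure μ] {t K : ℝ} (ht : 0 < t)
    (hX : ∀ i, Integrable (X i) μ) (hexp : ∀ i, Integrable (fun ω => exp (t * X i ω)) μ)
    (hK : ∀ i, cgf (X i) μ t ≤ K) :
    ∫ ω, ⨆ i, X i ω ∂μ ≤ (log (Nat.card ι) + K) / t := by
  have := Fintype.ofFinite ι
  have hM : Integrable (fun ω => t * ⨆ i, X i ω) μ :=
    (integrable_iSup_of_finite hX).const_mul t
  have exp_iSup_le (ω : Ω) : exp (t * ⨆ i, X i ω) ≤ ∑ i, exp (t * X i ω) := by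
    obtain ⟨i, hi⟩ := exists_eq_ciSup_of_finite (f := fun i => X i ω)
    rw [← hi]
    exact Finset.single_le_sum (f := fun i => exp (t * X i ω)) (fun _ _ => (exp_pos _).le)
      (Finset.mem_univ i)
  have hsum : Integrable (fun ω => ∑ i, exp (t * X i ω)) μ :=
    integrable_finsetSum _ fun i _ => hexp i
  have hexpM : Integrable (fun ω => exp (t * ⨆ i, X i ω)) μ :=
    hsum.mono' (continuous_exp.comp_aestronglyMeasurable hM.1)
      (.of_forall fun ω => by simpa using exp_iSup_le ω)
  have exp_integral_le : exp (t * ∫ ω, ⨆ i, X i ω ∂μ) ≤ exp (log (Nat.card ι) + K) :=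
    calc exp (t * ∫ ω, ⨆ i, X i ω ∂μ)
        ≤ ∫ ω, exp (t * ⨆ i, X i ω) ∂μ := by
          rw [← integral_const_mul]
          exact convexOn_exp.map_integral_le continuous_exp.continuousOn isClosed_univ
            (.of_forall fun _ => Set.mem_univ _) hM hexpM
      _ ≤ ∫ ω, ∑ i, exp (t * X i ω) ∂μ := integral_mono hexpM hsum exp_iSup_le
      _ = ∑ i, exp (cgf (X i) μ t) := by
          rw [integral_finsetSum _ fun i _ => hexp i]
          exact Finset.sum_congr rfl fun i _ => (exp_cgf (hexp i)).symm
      _ ≤ ∑ _ : ι, exp K := Finset.sum_le_sum fun i _ => exp_le_exp.2 (hK i)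
      _ = exp (log (Nat.card ι) + K) := by
          rw [Finset.sum_const, Finset.card_univ, nsmul_eq_mul, exp_add, Nat.card_eq_fintype_card,
            exp_log (by exact_mod_cast Fintype.card_pos)]
  rw [le_div_iff₀ ht, mul_comm]
  exact exp_le_exp.1 exp_integral_le

end ExponentialMoments

section Grid

variable {m n : ℕ}

lemma cellCount_eq_occupancy (i j : Fin n) (ω : Fin m → Fin n × Fin n) :
    cellCount i j ω = occupancy ω (i, j) :=
  rfl

lemma assignSum_eq_sum_ite (σ : Equiv.Perm (Fin n)) (ω : Fin m → Fin n × Fin n) :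
    assignSum σ ω = ∑ k, if σ (ω k).1 = (ω k).2 then (1 : ℝ) else 0 := by
  simp_rw [assignSum, cellCount, Finset.card_filter, Nat.cast_sum]
  rw [Finset.sum_comm]
  refine Finset.sum_congr rfl fun k _ => ?_
  rw [Finset.sum_eq_single (ω k).1]
  · simp [Prod.ext_iff, eq_comm]
  · rintro i - hi
    simp [Prod.ext_iff, hi.symm]
  · simp

lemma assignSum_nonneg (σ : Equiv.Perm (Fin n)) (ω : Fin m → Fin n × Fin n) :
    0 ≤ assignSum σ ω :=
  Finset.sum_nonneg fun _ _ => Nat.cast_nonneg _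

lemma assignSum_le_maxAssign (σ : Equiv.Perm (Fin n)) (ω : Fin m → Fin n × Fin n) :
    assignSum σ ω ≤ maxAssign ω :=
  le_ciSup (f := fun σ => assignSum σ ω) (Set.finite_range _).bddAbove σ

lemma maxAssign_nonneg (ω : Fin m → Fin n × Fin n) : 0 ≤ maxAssign ω :=
  Real.iSup_nonneg fun σ => assignSum_nonneg σ ω

lemma sub_mul_le_maxAssign {T : ℕ} {κ : ℝ} {ω : Fin m → Fin n × Fin n}
    (hω : ∀ A B : Finset (Fin n), κ ≤ A.card → κ ≤ B.card →
      ∃ i ∈ A, ∃ j ∈ B, T ≤ cellCount i j ω) :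
    (n - κ) * T ≤ maxAssign ω := by
  obtain ⟨σ, hσ⟩ := exists_perm_not_rel_of_not_rel fun i j => T ≤ cellCount i j ω
  let bad : Finset (Fin n) := {i | ¬ T ≤ cellCount i (σ i) ω}
  have mem_bad {i : Fin n} : i ∈ bad ↔ ¬ T ≤ cellCount i (σ i) ω := Finset.mem_filter_univ i
  have card_bad : (bad.card : ℝ) ≤ κ := by
    by_contra! h
    obtain ⟨i, hi, j, hj, hij⟩ :=
      hω bad (bad.map σ.toEmbedding) h.le (by rw [Finset.card_map]; exact h.le)
    obtain ⟨k, hk, rfl⟩ := Finset.mem_map.1 hj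
    exact hσ i k (mem_bad.1 hi) (mem_bad.1 hk) hij
  calc (n - κ) * T ≤ (n - bad.card) * T := by gcongr
    _ = ∑ _ ∈ badᶜ, (T : ℝ) := by
      rw [Finset.sum_const, nsmul_eq_mul, Finset.card_compl, Nat.cast_sub (Finset.card_le_univ _),
        Fintype.card_fin]
    _ ≤ ∑ i ∈ badᶜ, (cellCount i (σ i) ω : ℝ) :=
      Finset.sum_le_sum fun i hi => Nat.cast_le.2 <| by simpa [mem_bad] using hi
    _ ≤ assignSum σ ω :=
      Finset.sum_le_univ_sum_of_nonneg fun _ => Nat.cast_nonneg _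
    _ ≤ maxAssign ω := assignSum_le_maxAssign σ ω

lemma cellMeasure_singleton (x : Fin n × Fin n) : cellMeasure n {x} = ((n : ENNReal) ^ 2)⁻¹ := by
  simp [cellMeasure]

lemma integral_cellMeasure (f : Fin n × Fin n → ℝ) :
    ∫ x, f x ∂(cellMeasure n) = (∑ x, f x) / n ^ 2 := by
  rw [cellMeasure, integral_smul_measure, integral_count]
  simp [div_eq_inv_mul]

instance [NeZero n] : IsProbabilityMeasure (cellMeasure n) where
  measure_univ := by
    simp [cellMeasure, Measure.count_univ, ← pow_two, ENNReal.inv_mul_cancel, NeZero.ne]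

instance [NeZero n] : IsProbabilityMeasure (gridMeasure m n) :=
  inferInstanceAs (IsProbabilityMeasure (Measure.pi fun _ => cellMeasure n))

variable [NeZero n]

lemma mgf_assignSum (σ : Equiv.Perm (Fin n)) (t : ℝ) :
    mgf (assignSum σ) (gridMeasure m n) t = (1 + (exp t - 1) / n) ^ m := by
  have exp_assignSum (ω : Fin m → Fin n × Fin n) :
      exp (t * assignSum σ ω) = ∏ k, if σ (ω k).1 = (ω k).2 then exp t else 1 := by
    rw [assignSum_eq_sum_ite, Finset.mul_sum, Real.exp_sum]
    exact Finset.prod_congr rfl fun k _ => by split_ifs <;> simp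
  have integral_cell :
      ∫ x, (if σ x.1 = x.2 then exp t else 1) ∂(cellMeasure n) = 1 + (exp t - 1) / n := by
    have ite_eq (x : Fin n × Fin n) :
        (if σ x.1 = x.2 then exp t else 1) = 1 + if σ x.1 = x.2 then exp t - 1 else 0 := by
      split_ifs <;> ring
    have sum_eq : ∑ x : Fin n × Fin n, (if σ x.1 = x.2 then exp t else 1) =
        n ^ 2 + n * (exp t - 1) := by
      simp_rw [ite_eq, Finset.sum_add_distrib, Fintype.sum_prod_type]
      simp [pow_two, mul_sub]
    have : (n : ℝ) ≠ 0 := NeZero.ne _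
    rw [integral_cellMeasure, sum_eq]
    field_simp
  simp_rw [mgf, exp_assignSum, gridMeasure]
  rw [integral_fintype_prod_eq_pow (f := fun x : Fin n × Fin n =>
    if σ x.1 = x.2 then exp t else 1), integral_cell, Fintype.card_fin]

lemma cgf_assignSum_le (σ : Equiv.Perm (Fin n)) (t : ℝ) :
    cgf (assignSum σ) (gridMeasure m n) t ≤ m * ((exp t - 1) / n) := by
  have one_le : (1 : ℝ) ≤ n := by exact_mod_cast NeZero.one_le
  have pos : 0 < 1 + (exp t - 1) / n :=
    calc 0 < (n - 1 + exp t) / n := div_pos (by linarith [exp_pos t]) (by linarith)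
      _ = 1 + (exp t - 1) / n := by field_simp; ring
  rw [cgf, mgf_assignSum, log_pow]
  gcongr
  linarith [log_le_sub_one_of_pos pos]

theorem EmaxAssign_le {t : ℝ} (ht : 0 < t) :
    EmaxAssign m n ≤ (n * log n + m * ((exp t - 1) / n)) / t := by
  have log_card_le : log (Nat.card (Equiv.Perm (Fin n))) ≤ n * log n := by
    rw [Nat.card_eq_fintype_card, Fintype.card_perm, Fintype.card_fin, ← log_pow]
    exact log_le_log (by positivity) (by exact_mod_cast n.factorial_le_pow)
  calc EmaxAssign m n
      ≤ (log (Nat.card (Equiv.Perm (Fin n))) + m * ((exp t - 1) / n)) / t :=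
        integral_iSup_le_of_cgf_le ht (fun _ => .of_finite) (fun _ => .of_finite)
          fun σ => cgf_assignSum_le σ t
    _ ≤ (n * log n + m * ((exp t - 1) / n)) / t := by gcongr

variable [NeZero m]

lemma gridMeasure_real_forall_cellCount_lt_le (A B : Finset (Fin n)) (T : ℕ) :
    (gridMeasure m n).real {ω | ∀ i ∈ A, ∀ j ∈ B, cellCount i j ω < T} ≤
      exp 1 * √m *
        exp (-(A.card * B.card * (poissonMeasure ((m : ℝ≥0) / n ^ 2)).real {T})) := by
  have bound := pi_real_forall_occupancy_lt_le (ι := Fin m) (cellMeasure n) (A ×ˢ B) T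
  have rate (x : Fin n × Fin n) : (m : ℝ≥0) * (cellMeasure n {x}).toNNReal = m / n ^ 2 := by
    simp [cellMeasure_singleton, div_eq_mul_inv]
  simp only [Finset.mem_product, Prod.forall, and_imp, Fintype.card_fin, rate, Finset.sum_const,
    Finset.card_product, nsmul_eq_mul, Nat.cast_mul] at bound
  simp_rw [cellCount_eq_occupancy]
  refine (measureReal_mono fun ω hω => ?_).trans bound
  exact fun i j hi hj => hω i hi j hj

lemma gridMeasure_real_maxAssign_lt_le {κ : ℝ} (hκ : 0 ≤ κ) (T : ℕ) :
    (gridMeasure m n).real {ω | maxAssign ω < (n - κ) * T} ≤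
      4 ^ n * (exp 1 * √m *
        exp (-(κ ^ 2 * (poissonMeasure ((m : ℝ≥0) / n ^ 2)).real {T}))) := by
  let blocks : Finset (Finset (Fin n) × Finset (Fin n)) :=
    {AB | κ ≤ AB.1.card ∧ κ ≤ AB.2.card}
  have card_blocks : (blocks.card : ℝ) ≤ 4 ^ n := by
    have h := Finset.card_le_univ blocks
    rw [Fintype.card_prod, Fintype.card_finset, Fintype.card_fin, ← mul_pow] at h
    exact_mod_cast h
  have cover : {ω : Fin m → Fin n × Fin n | maxAssign ω < (n - κ) * T} ⊆
      ⋃ AB ∈ blocks, {ω | ∀ i ∈ AB.1, ∀ j ∈ AB.2, cellCount i j ω < T} := by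
    intro ω hω
    by_contra hcover
    refine hω.not_ge (sub_mul_le_maxAssign fun A B hA hB => ?_)
    by_contra! hlt
    exact hcover (Set.mem_biUnion ((Finset.mem_filter_univ (A, B)).2 ⟨hA, hB⟩) hlt)
  have block_bound {AB : Finset (Fin n) × Finset (Fin n)} (hAB : AB ∈ blocks) :
      (gridMeasure m n).real {ω | ∀ i ∈ AB.1, ∀ j ∈ AB.2, cellCount i j ω < T} ≤
        exp 1 * √m * exp (-(κ ^ 2 * (poissonMeasure ((m : ℝ≥0) / n ^ 2)).real {T})) := by
    obtain ⟨hA, hB⟩ := (Finset.mem_filter_univ AB).1 hAB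
    refine (gridMeasure_real_forall_cellCount_lt_le AB.1 AB.2 T).trans ?_
    rw [pow_two κ]
    gcongr
  calc (gridMeasure m n).real {ω | maxAssign ω < (n - κ) * T}
      ≤ ∑ AB ∈ blocks,
          (gridMeasure m n).real {ω | ∀ i ∈ AB.1, ∀ j ∈ AB.2, cellCount i j ω < T} :=
        (measureReal_mono cover (measure_ne_top _ _)).trans (measureReal_biUnion_finset_le _ _)
    _ ≤ blocks.card •
          (exp 1 * √m * exp (-(κ ^ 2 * (poissonMeasure ((m : ℝ≥0) / n ^ 2)).real {T}))) :=
        Finset.sum_le_card_nsmul _ _ _ fun _ hAB => block_bound hAB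
    _ ≤ _ := by rw [nsmul_eq_mul]; gcongr

theorem sub_mul_mul_le_EmaxAssign {κ : ℝ} (hκ : 0 ≤ κ) (hκn : κ ≤ n) (T : ℕ) :
    (n - κ) * T * (1 - 4 ^ n * (exp 1 * √m *
        exp (-(κ ^ 2 * (poissonMeasure ((m : ℝ≥0) / n ^ 2)).real {T})))) ≤
      EmaxAssign m n := by
  have compl_eq : {ω : Fin m → Fin n × Fin n | maxAssign ω < (n - κ) * T}ᶜ =
      {ω | (n - κ) * T ≤ maxAssign ω} := by
    ext; simp
  have prob_bound := gridMeasure_real_maxAssign_lt_le (m := m) (n := n) hκ T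
  calc _ ≤ (n - κ) * T * (1 - (gridMeasure m n).real {ω | maxAssign ω < (n - κ) * T}) := by
        have : 0 ≤ n - κ := sub_nonneg.2 hκn
        gcongr
    _ = (n - κ) * T * (gridMeasure m n).real {ω | (n - κ) * T ≤ maxAssign ω} := by
        rw [← probReal_compl_eq_one_sub .of_discrete, compl_eq]
    _ ≤ EmaxAssign m n :=
        mul_meas_ge_le_integral_of_nonneg (.of_forall maxAssign_nonneg) .of_finite _

end Grid

section Asymptotics

open Asymptotics

lemma strictMonoOn_klFun : StrictMonoOn klFun (Set.Ici 1) :=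
  strictMonoOn_of_deriv_pos (convex_Ici 1) continuous_klFun.continuousOn fun x hx => by
    rw [interior_Ici] at hx
    exact deriv_klFun ▸ log_pos hx

lemma tendsto_log_div_of_tendsto_div {β : Type*} {l : Filter β} {f L : β → ℝ} {a : ℝ}
    (hL : Tendsto L l atTop) (ha : a ≠ 0) (hf : Tendsto (fun i => f i / L i) l (𝓝 a)) :
    Tendsto (fun i => log (f i) / L i) l (𝓝 0) := by
  have log_div_self : Tendsto (fun i => log (L i) / L i) l (𝓝 0) :=
    isLittleO_log_id_atTop.tendsto_div_nhds_zero.comp hL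
  have := ((hf.log ha).mul hL.inv_tendsto_atTop).add log_div_self
  rw [mul_zero, add_zero] at this
  refine this.congr' ?_
  filter_upwards [hf.eventually_ne ha, hL.eventually_gt_atTop 0] with i hi hLi
  rw [log_div (fun h => hi (by simp [h])) hLi.ne', Pi.inv_apply]
  ring

theorem eventually_exp_mul_le_poissonMeasure_real {β : Type*} {l : Filter β} {L : β → ℝ}
    {r : β → ℝ≥0} {T : β → ℕ} {c H b : ℝ} (hL : Tendsto L l atTop) (hc : 0 < c) (hH : 0 < H)
    (hr : Tendsto (fun i => r i / L i) l (𝓝 c))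
    (hT : Tendsto (fun i => T i / L i) l (𝓝 (c * H))) (hb : b < -(c * klFun H)) :
    ∀ᶠ i in l, exp (b * L i) ≤ (poissonMeasure (r i)).real {T i} := by
  have hcH : 0 < c * H := mul_pos hc hH
  have ratio : Tendsto (fun i => (T i : ℝ) / r i) l (𝓝 H) := by
    have := hT.div hr hc.ne'
    rw [mul_div_cancel_left₀ _ hc.ne'] at this
    refine this.congr' ?_
    filter_upwards [hL.eventually_gt_atTop 0] with i hi
    exact div_div_div_cancel_right₀ hi.ne' _ _
  have exponent : Tendsto
      (fun i => -(r i / L i * klFun (T i / r i)) - (L i)⁻¹ - log (T i) / L i / 2) l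
      (𝓝 (-(c * klFun H))) := by
    have := ((hr.mul (continuous_klFun.continuousAt.tendsto.comp ratio)).neg.sub
      hL.inv_tendsto_atTop).sub ((tendsto_log_div_of_tendsto_div hL hcH.ne' hT).div_const 2)
    simpa using this
  filter_upwards [exponent.eventually_const_lt hb, hL.eventually_gt_atTop 0,
    hr.eventually_ne hc.ne', hT.eventually_ne hcH.ne'] with i hi hLi hri hTi
  have hr0 : r i ≠ 0 := fun h => hri (by simp [h])
  have hT0 : T i ≠ 0 := fun h => hTi (by simp [h])
  have hTpos : (0 : ℝ) < T i := by positivity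
  have stirling := exp_neg_mul_klFun_le_poissonMeasure_real hr0 hT0
  calc exp (b * L i)
      ≤ exp ((-(r i / L i * klFun (T i / r i)) - (L i)⁻¹ - log (T i) / L i / 2) * L i) := by
        gcongr
    _ = exp (-(r i * klFun (T i / r i))) / (exp 1 * √(T i)) := by
        rw [← exp_log (sqrt_pos.2 hTpos), log_sqrt hTpos.le, ← exp_add, ← exp_sub]
        congr 1
        field_simp
        ring
    _ ≤ (poissonMeasure (r i)).real {T i} := by
        rwa [div_le_iff₀' (by positivity)]

lemma tendsto_pow_mul_sqrt_mul_exp_neg {m p : ℕ → ℝ} {d : ℕ} {a C ε : ℝ} (ha : 0 < a)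
    (hε : 0 < ε) (hm : m =O[atTop] fun n => (n : ℝ) ^ d)
    (hp : Tendsto (fun n => n * p n) atTop atTop) :
    Tendsto (fun n => a ^ n * (C * √(m n) * exp (-((ε * n) ^ 2 * p n)))) atTop (𝓝 0) := by
  have sqrt_part : Tendsto (fun n : ℕ => √(m n / exp (2 * n))) atTop (𝓝 0) := by
    have pow_isLittleO : (fun n : ℕ => (n : ℝ) ^ d) =o[atTop] fun n : ℕ => exp (2 * n) :=
      (isLittleO_pow_exp_pos_mul_atTop d two_pos).comp_tendsto tendsto_natCast_atTop_atTop
    simpa using (hm.trans_isLittleO pow_isLittleO).tendsto_div_nhds_zero.sqrt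
  have exp_part : Tendsto (fun n : ℕ => exp (n * (log a + 1 - ε ^ 2 * (n * p n)))) atTop (𝓝 0) :=
    tendsto_exp_atBot.comp <| tendsto_natCast_atTop_atTop.atTop_mul_atBot₀ <|
      tendsto_atBot_add_const_left _ _ <| tendsto_neg_atTop_atBot.comp <|
        hp.const_mul_atTop (by positivity)
  have := (sqrt_part.const_mul C).mul exp_part
  rw [mul_zero] at this
  refine this.congr fun n => ?_
  have exp_split : exp (n * (log a + 1 - ε ^ 2 * (n * p n))) =
      a ^ n * exp n * exp (-((ε * n) ^ 2 * p n)) := by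
    rw [← exp_log (pow_pos ha n), log_pow, ← exp_add, ← exp_add]
    congr 1
    ring
  have sqrt_exp : √(exp (2 * n)) = exp n := by
    rw [← exp_half, mul_div_cancel_left₀ _ two_ne_zero]
  rw [sqrt_div' _ (exp_nonneg _), sqrt_exp, exp_split]
  field_simp

lemma tendsto_log_natCast_atTop : Tendsto (fun n : ℕ => log n) atTop atTop :=
  tendsto_log_atTop.comp tendsto_natCast_atTop_atTop

variable {m : ℕ → ℕ} {c : ℝ}

lemma isBigO_pow_three_of_tendsto
    (h : Tendsto (fun n : ℕ => ((m n : ℝ) / (n : ℝ) ^ 2) / log n) atTop (𝓝 c)) :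
    (fun n => (m n : ℝ)) =O[atTop] fun n => (n : ℝ) ^ 3 := by
  refine .of_bound (c + 1) ?_
  filter_upwards [h.eventually_lt_const (lt_add_one c), eventually_gt_atTop 1] with n hlt hn
  have hlog : 0 < log n := log_pos (by exact_mod_cast hn)
  have hn0 : (0 : ℝ) < n := by positivity
  have hc : 0 ≤ c + 1 := le_trans (by positivity) hlt.le
  rw [div_lt_iff₀ hlog, div_lt_iff₀ (by positivity)] at hlt
  rw [norm_of_nonneg (by positivity), norm_of_nonneg (by positivity)]
  calc (m n : ℝ) ≤ (c + 1) * log n * n ^ 2 := hlt.le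
    _ ≤ (c + 1) * n * n ^ 2 := by
      gcongr
      exact log_le_self hn0.le
    _ = (c + 1) * n ^ 3 := by ring

theorem eventually_EmaxAssign_div_lt {t b : ℝ}
    (h : Tendsto (fun n : ℕ => ((m n : ℝ) / (n : ℝ) ^ 2) / log n) atTop (𝓝 c)) (ht : 0 < t)
    (hb : (1 + c * (exp t - 1)) / t < b) :
    ∀ᶠ n : ℕ in atTop, EmaxAssign (m n) n / (n * log n) < b := by
  have limit := ((h.mul_const (exp t - 1)).const_add 1).div_const t
  filter_upwards [limit.eventually_lt_const hb, eventually_gt_atTop 1] with n hlt hn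
  have : NeZero n := ⟨by positivity⟩
  have hlog : 0 < log n := log_pos (by exact_mod_cast hn)
  refine lt_of_le_of_lt ?_ hlt
  rw [div_le_iff₀ (by positivity)]
  refine (EmaxAssign_le ht).trans_eq ?_
  field_simp

lemma tendsto_mul_poissonMeasure_real_atTop {H : ℝ} (hc : 0 < c)
    (h : Tendsto (fun n : ℕ => ((m n : ℝ) / (n : ℝ) ^ 2) / log n) atTop (𝓝 c)) (hH : 0 < H)
    (hkl : c * klFun H < 1) :
    Tendsto (fun n : ℕ => n * (poissonMeasure ((m n : ℝ≥0) / n ^ 2)).real {⌈c * H * log n⌉₊})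
      atTop atTop := by
  obtain ⟨b, hb, hbkl⟩ := exists_between (neg_lt_neg hkl)
  have lower : ∀ᶠ n : ℕ in atTop,
      exp (b * log n) ≤ (poissonMeasure ((m n : ℝ≥0) / n ^ 2)).real {⌈c * H * log n⌉₊} :=
    eventually_exp_mul_le_poissonMeasure_real tendsto_log_natCast_atTop hc hH
      (by push_cast; exact h)
      ((tendsto_nat_ceil_mul_div_atTop (by positivity)).comp tendsto_log_natCast_atTop) hbkl
  have growth : Tendsto (fun n : ℕ => exp ((1 + b) * log n)) atTop atTop :=
    tendsto_exp_atTop.comp (tendsto_log_natCast_atTop.const_mul_atTop (by linarith))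
  refine tendsto_atTop_mono' _ ?_ growth
  filter_upwards [lower, eventually_gt_atTop 0] with n hle hn
  have hn0 : (0 : ℝ) < n := by positivity
  calc exp ((1 + b) * log n) = n * exp (b * log n) := by
        rw [add_mul, one_mul, exp_add, exp_log hn0]
    _ ≤ _ := by gcongr

theorem eventually_lt_EmaxAssign_div {H b : ℝ} (hc : 0 < c)
    (h : Tendsto (fun n : ℕ => ((m n : ℝ) / (n : ℝ) ^ 2) / log n) atTop (𝓝 c)) (hH : 0 < H)
    (hkl : c * klFun H < 1) (hb : b < c * H) :
    ∀ᶠ n : ℕ in atTop, b < EmaxAssign (m n) n / (n * log n) := by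
  obtain ⟨ε, hbε, hε0, hε1⟩ : ∃ ε : ℝ, b < (1 - ε) * (c * H) ∧ 0 < ε ∧ ε < 1 := by
    have hcont : Tendsto (fun ε : ℝ => (1 - ε) * (c * H)) (𝓝[>] 0) (𝓝 (c * H)) :=
      tendsto_nhdsWithin_of_tendsto_nhds (Continuous.tendsto' (by fun_prop) _ _ (by simp))
    exact ((hcont.eventually_const_lt hb).and (Ioo_mem_nhdsGT one_pos)).exists
  set T : ℕ → ℕ := fun n => ⌈c * H * log n⌉₊
  set p : ℕ → ℝ := fun n => (poissonMeasure ((m n : ℝ≥0) / n ^ 2)).real {T n}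
  set δ : ℕ → ℝ := fun n => 4 ^ n * (exp 1 * √(m n) * exp (-((ε * n) ^ 2 * p n)))
  have hδ : Tendsto δ atTop (𝓝 0) :=
    tendsto_pow_mul_sqrt_mul_exp_neg four_pos hε0 (isBigO_pow_three_of_tendsto h)
      (tendsto_mul_poissonMeasure_real_atTop hc h hH hkl)
  have hT : Tendsto (fun n => (T n : ℝ) / log n) atTop (𝓝 (c * H)) :=
    (tendsto_nat_ceil_mul_div_atTop (by positivity)).comp tendsto_log_natCast_atTop
  have limit : Tendsto (fun n => (1 - ε) * (T n / log n) * (1 - δ n)) atTop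
      (𝓝 ((1 - ε) * (c * H))) := by
    simpa using (hT.const_mul (1 - ε)).mul (hδ.const_sub 1)
  filter_upwards [limit.eventually_const_lt hbε, h.eventually_ne hc.ne',
    eventually_gt_atTop 1] with n hlt hm hn
  have : NeZero n := ⟨by positivity⟩
  have : NeZero (m n) := ⟨fun h0 => hm (by simp [h0])⟩
  have hlog : 0 < log n := log_pos (by exact_mod_cast hn)
  have hn0 : (0 : ℝ) < n := by positivity
  refine hlt.trans_le ?_
  rw [le_div_iff₀ (by positivity)]
  calc (1 - ε) * (T n / log n) * (1 - δ n) * (n * log n)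
      = (n - ε * n) * T n * (1 - δ n) := by field_simp
    _ ≤ EmaxAssign (m n) n :=
      sub_mul_mul_le_EmaxAssign (by positivity) (mul_le_of_le_one_left hn0.le hε1.le) (T n)

end Asymptotics

/-- **Critical zone, maxima.**  If `m(n) n⁻² / log n → c > 0` and `H* > 1` is the unique
solution of `H log H - (H - 1) = 1/c`, then
`E[max_σ ∑ i, X_{i σ(i)}] = c H* n log n (1 + o(1))`. -/
theorem expected_max_critical (m : ℕ → ℕ) (hm : ∀ n, 0 < m n) (c : ℝ) (hc : 0 < c)
    (h : Tendsto (fun n : ℕ => ((m n : ℝ) / (n : ℝ) ^ 2) / Real.log n) atTop (nhds c))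
    (Hstar : ℝ) (hHgt : 1 < Hstar)
    (hHeq : Hstar * Real.log Hstar - (Hstar - 1) = 1 / c)
    (hHuniq : ∀ H : ℝ, 1 < H → H * Real.log H - (H - 1) = 1 / c → H = Hstar) :
    Tendsto (fun n : ℕ => EmaxAssign (m n) n / (c * Hstar * (n : ℝ) * Real.log n))
      atTop (nhds 1) := by
  have hklHstar : c * klFun Hstar = 1 := by
    rw [eq_div_iff hc.ne'] at hHeq
    rw [klFun_apply]
    linarith
  have main : Tendsto (fun n : ℕ => EmaxAssign (m n) n / (n * log n)) atTop
      (𝓝 (c * Hstar)) := by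
    refine tendsto_order.2 ⟨fun b hb => ?_, fun b hb => ?_⟩
    · obtain ⟨H, hH, hHlt⟩ := exists_between (max_lt hHgt ((div_lt_iff₀' hc).2 hb))
      obtain ⟨hH1, hbH⟩ := max_lt_iff.1 hH
      refine eventually_lt_EmaxAssign_div hc h (one_pos.trans hH1) ?_ ((div_lt_iff₀' hc).1 hbH)
      exact hklHstar ▸ mul_lt_mul_of_pos_left (strictMonoOn_klFun hH1.le hHgt.le hHlt) hc
    · refine eventually_EmaxAssign_div_lt h (log_pos hHgt) (lt_of_eq_of_lt ?_ hb)
      rw [exp_log (one_pos.trans hHgt), div_eq_iff (log_pos hHgt).ne']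
      rw [klFun_apply] at hklHstar
      linarith
  have hcH : c * Hstar ≠ 0 := by positivity
  simpa [div_div, hcH, mul_assoc, mul_comm, mul_left_comm] using main.div_const (c * Hstar)

end
end
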